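/- arXiv:2303.14810 — 2 statements merged into one kernel-verified Lean document; each statement's English description precedes it below -/
import Mathlib

section
/- Let α, β ∈ ℕ^k and let f(x) = x_1^{β_1} ⋯ x_k^{β_k} − x_1^{α_1} ⋯ x_k^{α_k}. If the symmetrization f_sym is nonnegative on ℝ^k, then for every a ∈ ℕ and every finite simple graph G, w_{α_1+2a}(G) ⋯ w_{α_k+2a}(G) ≤ w_{β_1+2a}(G) ⋯ w_{β_k+2a}(G), where w_j(G) denotes the number of walks of length j in G. -/
open Finset

/-- The number of walks of length `k` in a graph `G`, computed as
`𝟙ᵀ A^k 𝟙 = ∑_{x,y} (A^k)_{x,y}` for the adjacency matrix `A`. -/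
noncomputable def walkNum {V : Type*} [Fintype V] [DecidableEq V] (G : SimpleGraph V)
    [DecidableRel G.Adj] (k : ℕ) : ℝ :=
  ∑ x : V, ∑ y : V, ((G.adjMatrix ℝ) ^ k) x y

theorem walkNum_spectral {V : Type*} [Fintype V] [DecidableEq V] (G : SimpleGraph V)
    [DecidableRel G.Adj] : ∃ (c l : V → ℝ), (∀ v, 0 ≤ c v) ∧
      ∀ k, walkNum G k = ∑ v, c v * l v ^ k := by
  have hA : (G.adjMatrix ℝ).IsHermitian := by
    simp [Matrix.IsHermitian, Matrix.conjTranspose_eq_transpose_of_trivial]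
  let b := hA.eigenvectorBasis
  let l := hA.eigenvalues
  let w : V → ℝ := fun v => ∑ x, b v x
  refine ⟨fun v => w v ^ 2, l, fun v => sq_nonneg _, fun k => ?_⟩
  have hpow : ∀ k v, ((G.adjMatrix ℝ) ^ k).mulVec (b v).ofLp = (l v) ^ k • (b v).ofLp := by
    intro k v
    induction k with
    | zero => simp
    | succ k ih =>
      rw [pow_succ, ← Matrix.mulVec_mulVec, hA.mulVec_eigenvectorBasis, Matrix.mulVec_smul]
      erw [ih]
      rw [smul_smul, pow_succ, mul_comm]
  let e : EuclideanSpace ℝ V := WithLp.toLp 2 (fun _ => 1)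
  have he : (fun _ => 1 : V → ℝ) = ∑ v, w v • (b v).ofLp := by
    have h := b.sum_repr' e
    have h2 := congrArg WithLp.ofLp h
    rw [WithLp.ofLp_sum] at h2
    simp only [WithLp.ofLp_smul] at h2
    have h3 : ∀ v, inner ℝ (b v) e = w v := by
      intro v; simp [PiLp.inner_apply, e, w]
    simp only [h3] at h2
    exact h2.symm
  have h1 : walkNum G k = ∑ x, ((G.adjMatrix ℝ) ^ k).mulVec (fun _ => 1 : V → ℝ) x := by
    simp [walkNum, Matrix.mulVec, dotProduct]
  rw [h1, he, Matrix.mulVec_sum]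
  simp only [Matrix.mulVec_smul, hpow, Finset.sum_apply, Pi.smul_apply, smul_eq_mul]
  rw [Finset.sum_comm]
  refine Finset.sum_congr rfl fun v _ => ?_
  rw [← Finset.mul_sum, ← Finset.mul_sum]
  change w v * (l v ^ k * w v) = _
  ring

theorem walk_shift_inequality {k : ℕ} (α β : Fin k → ℕ)
    (hsym : ∀ x : Fin k → ℝ,
      0 ≤ ∑ σ : Equiv.Perm (Fin k),
        ((∏ i, x (σ i) ^ β i) - ∏ i, x (σ i) ^ α i))
    (a : ℕ)
    (V : Type) [Fintype V] [DecidableEq V] (G : SimpleGraph V) [DecidableRel G.Adj] :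
    ∏ i, walkNum G (α i + 2 * a) ≤ ∏ i, walkNum G (β i + 2 * a) := by
  obtain ⟨c, l, hc, hw⟩ := walkNum_spectral G
  have key : ∀ γ : Fin k → ℕ, ∀ σ : Equiv.Perm (Fin k),
      ∏ i, walkNum G (γ i + 2 * a) =
        ∑ p : Fin k → V, (∏ i, c (p i) * l (p i) ^ (2 * a)) * ∏ i, l (p (σ i)) ^ γ i := by
    intro γ σ
    simp only [hw]
    rw [Finset.prod_univ_sum, Fintype.piFinset_univ]
    refine Fintype.sum_equiv (Equiv.arrowCongr σ (Equiv.refl V)) _ _ fun p => ?_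
    have h := Equiv.prod_comp σ.symm (fun i => c (p i) * l (p i) ^ (2 * a))
    simp only [Equiv.arrowCongr_apply, Equiv.coe_refl, Function.comp, id,
      Equiv.symm_apply_apply]
    rw [h, ← Finset.prod_mul_distrib]
    exact Finset.prod_congr rfl fun i _ => by ring
  have hs : 0 ≤ ∑ σ : Equiv.Perm (Fin k),
      (∏ i, walkNum G (β i + 2 * a) - ∏ i, walkNum G (α i + 2 * a)) := by
    have : ∑ σ : Equiv.Perm (Fin k),
        (∏ i, walkNum G (β i + 2 * a) - ∏ i, walkNum G (α i + 2 * a)) =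
        ∑ p : Fin k → V, (∏ i, c (p i) * l (p i) ^ (2 * a)) *
          ∑ σ : Equiv.Perm (Fin k),
            ((∏ i, l (p (σ i)) ^ β i) - ∏ i, l (p (σ i)) ^ α i) := by
      simp only [Finset.mul_sum]
      rw [Finset.sum_comm]
      refine Finset.sum_congr rfl fun σ _ => ?_
      rw [key β σ, key α σ, ← Finset.sum_sub_distrib]
      exact Finset.sum_congr rfl fun p _ => by ring
    rw [this]
    refine Finset.sum_nonneg fun p _ => mul_nonneg ?_ (hsym fun i => l (p i))
    refine Finset.prod_nonneg fun i _ => mul_nonneg (hc _) ?_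
    rw [pow_mul]
    positivity
  rw [Finset.sum_const, nsmul_eq_mul] at hs
  have hpos : (0 : ℝ) < ((Finset.univ : Finset (Equiv.Perm (Fin k))).card : ℝ) := by
    exact_mod_cast Finset.card_pos.mpr Finset.univ_nonempty
  exact sub_nonneg.mp (nonneg_of_mul_nonneg_right hs hpos)
end

section
/- For all a, b ∈ ℕ and every finite simple graph G, the inequality w_{a+b}(G)² ≤ w_{2a}(G) · w_{2b}(G) holds, where w_j(G) denotes the number of walks of length j in G. -/
open Finset

theorem walkNum_add {V : Type*} [Fintype V] [DecidableEq V] (G : SimpleGraph V)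
    [DecidableRel G.Adj] (a b : ℕ) :
    walkNum G (a + b) =
      ∑ z : V, (∑ x : V, ((G.adjMatrix ℝ) ^ a) z x) * (∑ y : V, ((G.adjMatrix ℝ) ^ b) z y) := by
  have hs : ∀ x z : V, ((G.adjMatrix ℝ) ^ a) x z = ((G.adjMatrix ℝ) ^ a) z x := by
    intro x z
    have h : ((G.adjMatrix ℝ) ^ a).IsSymm := by
      rw [Matrix.IsSymm, Matrix.transpose_pow, SimpleGraph.transpose_adjMatrix]
    exact h.apply z x
  unfold walkNum
  simp only [pow_add, Matrix.mul_apply]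
  simp only [Finset.sum_mul_sum]
  rw [Finset.sum_comm (s := (Finset.univ : Finset V))
    (f := fun z x => ∑ y : V, ((G.adjMatrix ℝ) ^ a) z x * ((G.adjMatrix ℝ) ^ b) z y)]
  refine Finset.sum_congr rfl fun x _ => ?_
  rw [Finset.sum_comm]
  refine Finset.sum_congr rfl fun z _ => ?_
  refine Finset.sum_congr rfl fun y _ => ?_
  rw [hs x z]

theorem dress_gutman (a b : ℕ)
    (V : Type) [Fintype V] [DecidableEq V] (G : SimpleGraph V) [DecidableRel G.Adj] :
    walkNum G (a + b) ^ 2 ≤ walkNum G (2 * a) * walkNum G (2 * b) := by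
  rw [two_mul, two_mul, walkNum_add, walkNum_add, walkNum_add]
  simp only [← pow_two]
  exact Finset.sum_mul_sq_le_sq_mul_sq _ _ _
end
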